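/- Let a, b, i, t be nonnegative integers with a ≥ b ≥ i ≥ t, and let μ = (a+i, b−i). Then π_μ∘δ_i∘Φ_t = c_t(a,b,i)·(π_μ∘δ_i) as linear maps Λ^a⊗Λ^b → L_μ, where c_t(a,b,i) = C(i,t)·C(a−b+t+i,t). Moreover, if n ≥ a+b, then the map π_μ∘δ_i : Λ^a⊗Λ^b → L_μ is nonzero. -/

import Mathlib

open TensorProduct

set_option synthInstance.maxHeartbeats 1000000
set_option maxSynthPendingDepth 3
set_option maxHeartbeats 1000000

noncomputable section

namespace MMS

variable (K : Type) [Field K] [CharZero K] (n : ℕ)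

/-- `V = K^n`, the natural module of `G = GL(n,K)`. -/
abbrev V : Type := Fin n → K

/-- `Λ^p`, the `p`-th exterior power of `V`. -/
abbrev Lam (p : ℕ) : Type := ⋀[K]^p (V K n)

/-- The wedge `v_1 ∧ ⋯ ∧ v_p ∈ Λ^p`. -/
def wedge {p : ℕ} (v : Fin p → V K n) : Lam K n p :=
  ⟨ExteriorAlgebra.ιMulti K p v, ExteriorAlgebra.ιMulti_range K p (Set.mem_range_self v)⟩

/-- Transport along an equality of degrees. -/
def ecast {p q : ℕ} (h : p = q) : Lam K n p ≃ₗ[K] Lam K n q :=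
  h ▸ LinearEquiv.refl K (Lam K n p)

/-- `m` is the wedge multiplication map `Λ^p ⊗ Λ^q → Λ^{p+q}`. -/
def IsMulMap (p q : ℕ) (m : Lam K n p ⊗[K] Lam K n q →ₗ[K] Lam K n (p+q)) : Prop :=
  ∀ (v : Fin p → V K n) (w : Fin q → V K n),
    m (wedge K n v ⊗ₜ[K] wedge K n w) = wedge K n (Fin.append v w)

/-- The set of `(p,q)`-shuffles: permutations `σ` of `{1, …, p+q}` which are strictly
increasing on the first `p` and on the last `q` indices. -/
def shuffles (p q : ℕ) : Finset (Equiv.Perm (Fin (p+q))) :=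
  Finset.univ.filter (fun σ =>
    (∀ i j : Fin (p+q), i < j → (j : ℕ) < p → σ i < σ j) ∧
    (∀ i j : Fin (p+q), i < j → p ≤ (i : ℕ) → σ i < σ j))

/-- `D` is the component `Δ_{p,q} : Λ^{p+q} → Λ^p ⊗ Λ^q` of the comultiplication, i.e.
`Δ_{p,q}(v_1 ∧ ⋯ ∧ v_{p+q}) = Σ_σ sgn(σ) (v_{σ(1)} ∧ ⋯ ∧ v_{σ(p)}) ⊗ (v_{σ(p+1)} ∧ ⋯ ∧ v_{σ(p+q)})`,
the sum being over all `(p,q)`-shuffles. -/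
def IsComulMap (p q : ℕ) (D : Lam K n (p+q) →ₗ[K] Lam K n p ⊗[K] Lam K n q) : Prop :=
  ∀ v : Fin (p+q) → V K n,
    D (wedge K n v) =
      ∑ σ ∈ shuffles p q,
        (Equiv.Perm.sign σ : ℤ) •
          (wedge K n (fun i => v (σ (Fin.castAdd q i))) ⊗ₜ[K]
            wedge K n (fun i => v (σ (Fin.natAdd p i))))

variable (mf : ∀ p q : ℕ, Lam K n p ⊗[K] Lam K n q →ₗ[K] Lam K n (p+q))
variable (Df : ∀ p q : ℕ, Lam K n (p+q) →ₗ[K] Lam K n p ⊗[K] Lam K n q)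

/-- The map `δ_t = (m ⊗ 1) ∘ (1 ⊗ Δ_{t,b-t}) : Λ^a ⊗ Λ^b → Λ^{a+t} ⊗ Λ^{b-t}`. -/
def deltaMap (a b t : ℕ) (ht : t ≤ b) :
    Lam K n a ⊗[K] Lam K n b →ₗ[K] Lam K n (a+t) ⊗[K] Lam K n (b-t) :=
  (TensorProduct.map (mf a t) LinearMap.id)
    ∘ₗ (TensorProduct.assoc K (Lam K n a) (Lam K n t) (Lam K n (b-t))).symm.toLinearMap
    ∘ₗ (TensorProduct.map LinearMap.id
        ((Df t (b-t)) ∘ₗ (ecast K n (by omega : b = t + (b-t))).toLinearMap))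

/-- The map `θ_t = (1 ⊗ m) ∘ (Δ_{a-t,t} ⊗ 1) : Λ^a ⊗ Λ^b → Λ^{a-t} ⊗ Λ^{b+t}`. -/
def thetaMap (a b t : ℕ) (ht : t ≤ a) :
    Lam K n a ⊗[K] Lam K n b →ₗ[K] Lam K n (a-t) ⊗[K] Lam K n (b+t) :=
  (TensorProduct.map LinearMap.id
      ((ecast K n (by omega : t + b = b + t)).toLinearMap ∘ₗ mf t b))
    ∘ₗ (TensorProduct.assoc K (Lam K n (a-t)) (Lam K n t) (Lam K n b)).toLinearMap
    ∘ₗ (TensorProduct.map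
        ((Df (a-t) t) ∘ₗ (ecast K n (by omega : a = (a-t) + t)).toLinearMap) LinearMap.id)

/-- The map `Φ_t = θ_t ∘ δ_t : Λ^a ⊗ Λ^b → Λ^a ⊗ Λ^b`. -/
def PhiMap (a b t : ℕ) (hta : t ≤ a) (htb : t ≤ b) :
    Lam K n a ⊗[K] Lam K n b →ₗ[K] Lam K n a ⊗[K] Lam K n b :=
  (TensorProduct.congr (ecast K n (by omega : a + t - t = a))
      (ecast K n (by omega : b - t + t = b))).toLinearMap
    ∘ₗ thetaMap K n mf Df (a+t) (b-t) t (by omega)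
    ∘ₗ deltaMap K n mf Df a b t htb

/-- The map `Φ_t`, extended by `0` to all `t`. -/
def PhiMap' (a b t : ℕ) :
    Lam K n a ⊗[K] Lam K n b →ₗ[K] Lam K n a ⊗[K] Lam K n b :=
  if h : t ≤ a ∧ t ≤ b then PhiMap K n mf Df a b t h.1 h.2 else 0

/-- The map `θ_1 : Λ^{a+1} ⊗ Λ^{b-1} → Λ^a ⊗ Λ^b` (for `b ≥ 1`). -/
def theta1 (a b : ℕ) (hb : 1 ≤ b) :
    Lam K n (a+1) ⊗[K] Lam K n (b-1) →ₗ[K] Lam K n a ⊗[K] Lam K n b :=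
  (TensorProduct.congr (ecast K n (by omega : a + 1 - 1 = a))
      (ecast K n (by omega : b - 1 + 1 = b))).toLinearMap
    ∘ₗ thetaMap K n mf Df (a+1) (b-1) 1 (by omega)

/-- The submodule of relations defining the Schur module `L_{(a,b)}`: the image of
`θ_1` if `b ≥ 1`, and `0` if `b = 0`. -/
def schurRel (a b : ℕ) : Submodule K (Lam K n a ⊗[K] Lam K n b) :=
  if hb : 1 ≤ b then LinearMap.range (theta1 K n mf Df a b hb) else ⊥

/-- The Schur module `L_{(a,b)}`, realized as the cokernel of `θ_1` (in characteristic zero). -/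
abbrev SchurL (a b : ℕ) : Type :=
  (Lam K n a ⊗[K] Lam K n b) ⧸ schurRel K n mf Df a b

/-- The projection `π_{(a,b)} : Λ^a ⊗ Λ^b → L_{(a,b)}`. -/
def schurProj (a b : ℕ) : Lam K n a ⊗[K] Lam K n b →ₗ[K] SchurL K n mf Df a b :=
  (schurRel K n mf Df a b).mkQ

/-- The coefficient `c_t(a,b,i) = C(i,t)·C(a-b+t+i,t)`. -/
def cCoef (a b t i : ℕ) : ℕ := (i.choose t) * ((a-b+t+i).choose t)

/-- The group `G = GL(n,K)`. -/
abbrev GLn : Type := Matrix.GeneralLinearGroup (Fin n) K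

/-- `rho` is the family of natural actions of `G = GL(n,K)` on the exterior powers `Λ^p`
of the natural module `V = K^n`. -/
def IsExtAction (rho : ∀ p : ℕ, GLn K n → (Lam K n p →ₗ[K] Lam K n p)) : Prop :=
  ∀ (p : ℕ) (g : GLn K n) (v : Fin p → V K n),
    rho p g (wedge K n v) =
      wedge K n (fun i => Matrix.toLin' (g : Matrix (Fin n) (Fin n) K) (v i))

/-- The action of `g ∈ GL(n,K)` on `Λ^a ⊗ Λ^b`. -/
def rhoT (rho : ∀ p : ℕ, GLn K n → (Lam K n p →ₗ[K] Lam K n p)) (a b : ℕ) (g : GLn K n) :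
    Lam K n a ⊗[K] Lam K n b →ₗ[K] Lam K n a ⊗[K] Lam K n b :=
  TensorProduct.map (rho a g) (rho b g)

/-- The quotients `M₁ ⧸ N₁` and `M₂ ⧸ N₂` are isomorphic as representations, with respect
to the given actions `ρ₁, ρ₂` on `M₁` and `M₂` (which descend to the quotients). -/
def IsQuotIso {G' : Type} {M₁ M₂ : Type} [AddCommGroup M₁] [Module K M₁]
    [AddCommGroup M₂] [Module K M₂]
    (N₁ : Submodule K M₁) (N₂ : Submodule K M₂)
    (ρ₁ : G' → M₁ →ₗ[K] M₁) (ρ₂ : G' → M₂ →ₗ[K] M₂) : Prop :=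
  ∃ e : (M₁ ⧸ N₁) ≃ₗ[K] (M₂ ⧸ N₂),
    ∀ (g : G') (x : M₁) (y : M₂),
      e (Submodule.Quotient.mk x) = Submodule.Quotient.mk y →
      e (Submodule.Quotient.mk (ρ₁ g x)) = Submodule.Quotient.mk (ρ₂ g y)

/-- The "multiply in pairs" map
`(Λ^{p₁} ⊗ Λ^{q₁}) ⊗ (Λ^{p₂} ⊗ Λ^{q₂}) → Λ^{p₁+p₂} ⊗ Λ^{q₁+q₂}`. -/
def pairMul (p₁ q₁ p₂ q₂ : ℕ) :
    (Lam K n p₁ ⊗[K] Lam K n q₁) ⊗[K] (Lam K n p₂ ⊗[K] Lam K n q₂) →ₗ[K]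
      Lam K n (p₁+p₂) ⊗[K] Lam K n (q₁+q₂) :=
  (TensorProduct.map (mf p₁ p₂) (mf q₁ q₂))
    ∘ₗ (TensorProduct.tensorTensorTensorComm K (Lam K n p₁) (Lam K n q₁)
        (Lam K n p₂) (Lam K n q₂)).toLinearMap

/-- The map `φ_k = (m ⊗ m) ∘ (1 ⊗ τ ⊗ 1) ∘ (Δ_{a-k,k} ⊗ Δ_{k,b-k}) : Λ^a ⊗ Λ^b → Λ^a ⊗ Λ^b`. -/
def phiSmall (a b k : ℕ) (hka : k ≤ a) (hkb : k ≤ b) :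
    Lam K n a ⊗[K] Lam K n b →ₗ[K] Lam K n a ⊗[K] Lam K n b :=
  (TensorProduct.congr (ecast K n (by omega : (a-k) + k = a))
      (ecast K n (by omega : k + (b-k) = b))).toLinearMap
    ∘ₗ pairMul K n mf (a-k) k k (b-k)
    ∘ₗ (TensorProduct.map
        ((Df (a-k) k) ∘ₗ (ecast K n (by omega : a = (a-k) + k)).toLinearMap)
        ((Df k (b-k)) ∘ₗ (ecast K n (by omega : b = k + (b-k))).toLinearMap))

/-- The map `ψ_k = C(b,k)·1 - φ_k : Λ^a ⊗ Λ^b → Λ^a ⊗ Λ^b`. -/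
def psiSmall (a b k : ℕ) (hka : k ≤ a) (hkb : k ≤ b) :
    Lam K n a ⊗[K] Lam K n b →ₗ[K] Lam K n a ⊗[K] Lam K n b :=
  (Nat.choose b k : K) • LinearMap.id - phiSmall K n mf Df a b k hka hkb

/-- The map `β_k = (m ⊗ m) ∘ (1 ⊗ τ ⊗ 1) ∘ (Δ_{a-k,k} ⊗ 1 ⊗ 1) : Λ^a ⊗ (Λ^k ⊗ Λ^{b-k}) → Λ^a ⊗ Λ^b`. -/
def betaMap (a b k : ℕ) (hka : k ≤ a) (hkb : k ≤ b) :
    Lam K n a ⊗[K] (Lam K n k ⊗[K] Lam K n (b-k)) →ₗ[K] Lam K n a ⊗[K] Lam K n b :=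
  (TensorProduct.congr (ecast K n (by omega : (a-k) + k = a))
      (ecast K n (by omega : k + (b-k) = b))).toLinearMap
    ∘ₗ pairMul K n mf (a-k) k k (b-k)
    ∘ₗ (TensorProduct.map
        ((Df (a-k) k) ∘ₗ (ecast K n (by omega : a = (a-k) + k)).toLinearMap)
        LinearMap.id)

/-- The map `γ_k : Λ^a ⊗ (Λ^k ⊗ Λ^{b-k}) → Λ^a ⊗ Λ^b`,
`γ_k(x ⊗ y ⊗ z) = x ⊗ (y ∧ z) - β_k(x ⊗ y ⊗ z)`. -/
def gammaMap (a b k : ℕ) (hka : k ≤ a) (hkb : k ≤ b) :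
    Lam K n a ⊗[K] (Lam K n k ⊗[K] Lam K n (b-k)) →ₗ[K] Lam K n a ⊗[K] Lam K n b :=
  (TensorProduct.map LinearMap.id
      ((ecast K n (by omega : k + (b-k) = b)).toLinearMap ∘ₗ mf k (b-k)))
    - betaMap K n mf Df a b k hka hkb

/-- The quantity `d_k(a,b,t)` (for the given `i`), from Lemma 5.3 of the paper. -/
def dInt (a b k i t : ℕ) : ℤ :=
  1 - ∑ j ∈ Finset.Icc (i - min (b-k) i) t,
        (-1:ℤ)^j * ((a-k+j).choose (a-k) : ℤ) * ((b-k+t-i).choose (t-j) : ℤ)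

end MMS

namespace MMS

/-!
Let `raise` be the operator `E` on `Λ ⊗ Λ` which moves one vector from the second factor to the
first, and `lower` the operator `F` which moves one back. They satisfy the `sl₂` relations, with
`Λ^p ⊗ Λ^q` of weight `p - q`, and `E ^ t = t! δ_t`, `F ^ t = t! θ_t`, so that
`(t!)² Φ_t = F ^ t E ^ t` and `L_μ` is a cokernel of `F`. Moving `F ^ t` to the left of `E ^ i` in
`E ^ i F ^ t E ^ t` leaves, modulo the image of `F`, a multiple of `E ^ i`; its coefficient is
`(t!)² c_t(a,b,i)`.

For the nonvanishing, the tensor `u` of `e_1 ∧ ⋯ ∧ e_{a+i}` and `e_1 ∧ ⋯ ∧ e_{b-i}` is a highest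
weight vector. Modulo the image of `F`, the vector `E ^ i F ^ i u` is a nonzero multiple of `u`, and
`u` is not in the image of `F` because `E F` is injective on vectors of positive weight.
-/

section Sl2

variable {R M : Type*} [CommRing R] [AddCommGroup M] [Module R M]

/-- `E` and `F` act on `M` as the raising and lowering operators of `sl₂`, and `W r` consists of
vectors of weight `c + 2 * r`. The index `r`, rather than the weight, labels `W` so that `E` and
`F` shift it by one; no direct sum decomposition is required. -/
structure IsSl2Action (E F : Module.End R M) (W : ℤ → Submodule R M) (c : R) : Prop where
  raise_mem : ∀ {r z}, z ∈ W r → E z ∈ W (r + 1)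
  lower_mem : ∀ {r z}, z ∈ W r → F z ∈ W (r - 1)
  raise_lower : ∀ {r z}, z ∈ W r → E (F z) = F (E z) + (c + 2 * r) • z

namespace IsSl2Action

variable {E F : Module.End R M} {W : ℤ → Submodule R M} {c : R}

lemma raise_pow_mem (h : IsSl2Action E F W c) {r : ℤ} {z : M} (hz : z ∈ W r) (m : ℕ) :
    (E ^ m) z ∈ W (r + m) := by
  induction m with
  | zero => simpa using hz
  | succ m ih =>
    rw [pow_succ', Module.End.mul_apply]
    simpa [add_assoc] using h.raise_mem ih

lemma lower_pow_mem (h : IsSl2Action E F W c) {r : ℤ} {z : M} (hz : z ∈ W r) (m : ℕ) :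
    (F ^ m) z ∈ W (r - m) := by
  induction m with
  | zero => simpa using hz
  | succ m ih =>
    rw [pow_succ', Module.End.mul_apply]
    simpa [sub_sub] using h.lower_mem ih

lemma raise_pow_succ_lower (h : IsSl2Action E F W c) {r : ℤ} {z : M} (hz : z ∈ W r) (m : ℕ) :
    (E ^ (m + 1)) (F z) = F ((E ^ (m + 1)) z) + ((m + 1) * (c + 2 * r + m)) • (E ^ m) z := by
  induction m with
  | zero => simpa using h.raise_lower hz
  | succ m ih =>
    rw [pow_succ', Module.End.mul_apply, ih, map_add, map_smul,
      h.raise_lower (h.raise_pow_mem hz (m + 1)), ← Module.End.mul_apply E, ← pow_succ',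
      ← Module.End.mul_apply E, ← pow_succ']
    push_cast
    module

lemma exists_raise_pow_lower_pow_eq (h : IsSl2Action E F W c) {r : ℤ} {z : M} (hz : z ∈ W r)
    (i t : ℕ) :
    ∃ w ∈ W (r + i - t + 1), (E ^ i) ((F ^ t) z) =
      F w + (i.descFactorial t * (descPochhammer R t).eval (c + 2 * r + i - t)) •
        (E ^ (i - t)) z := by
  induction t generalizing i with
  | zero => exact ⟨0, zero_mem _, by simp⟩
  | succ t ih =>
    have hFt := h.lower_pow_mem hz t
    cases i with
    | zero =>
      refine ⟨(F ^ t) z, ?_, by simp [pow_succ' F]⟩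
      convert hFt using 2
      push_cast
      ring
    | succ i =>
      obtain ⟨w, hw, hEF⟩ := ih i
      refine ⟨(E ^ (i + 1)) ((F ^ t) z) + ((i + 1) * (c + 2 * r + i - 2 * t) : R) • w,
        add_mem ?_ (Submodule.smul_mem _ _ ?_), ?_⟩
      · convert h.raise_pow_mem hFt (i + 1) using 2
        push_cast
        ring
      · convert hw using 2
        push_cast
        ring
      · have hweight : c + 2 * r + (i + 1 : ℕ) - (t + 1 : ℕ) = c + 2 * r + i - t := by
          push_cast
          ring
        rw [pow_succ' F, Module.End.mul_apply, h.raise_pow_succ_lower hFt, hEF,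
          Nat.succ_descFactorial_succ, descPochhammer_succ_eval, Nat.add_sub_add_right, hweight]
        simp only [map_add, map_smul]
        push_cast
        module

lemma exists_raise_pow_lower_pow_raise_pow_eq (h : IsSl2Action E F W c) {r : ℤ} {z : M}
    (hz : z ∈ W r) (i t : ℕ) :
    ∃ w ∈ W (r + i + 1), (E ^ i) ((F ^ t) ((E ^ t) z)) =
      F w + (i.descFactorial t * (descPochhammer R t).eval (c + 2 * r + t + i)) • (E ^ i) z := by
  obtain ⟨w, hw, hEF⟩ := h.exists_raise_pow_lower_pow_eq (h.raise_pow_mem hz t) i t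
  refine ⟨w, by convert hw using 2; ring, hEF.trans ?_⟩
  have hweight : c + 2 * (r + t : ℤ) + i - t = c + 2 * r + t + i := by
    push_cast
    ring
  rw [hweight]
  rcases le_or_gt t i with hti | hit
  · rw [← Module.End.mul_apply, ← pow_add, Nat.sub_add_cancel hti]
  · simp [Nat.descFactorial_eq_zero_iff_lt.mpr hit]

section TorsionFree

variable [IsDomain R] [CharZero R] [Module.IsTorsionFree R M]

lemma eq_zero_of_raise_lower_eq_zero (h : IsSl2Action E F W c) {r : ℤ} {w : M} (hw : w ∈ W r)
    (hEF : E (F w) = 0) {l : ℕ} (hl : c + 2 * r = l + 1) {N : ℕ} (hN : (E ^ N) w = 0) :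
    w = 0 := by
  induction N with
  | zero => simpa using hN
  | succ N ih =>
    have key := h.raise_pow_succ_lower hw N
    rw [pow_succ, Module.End.mul_apply, hEF, map_zero, ← pow_succ, hN, map_zero, zero_add,
      hl] at key
    refine ih ((smul_eq_zero.mp key.symm).resolve_left ?_)
    exact_mod_cast (by positivity : (N + 1) * (l + 1 + N) ≠ 0)

/-- Modulo `F (W (r + 1))` the vector `E ^ i (F ^ i u)` is a nonzero multiple of the highest weight
vector `u`. Were it zero there, `F v` would be a nonzero multiple of `u` for some `v`, and then
`E (F v) = 0` forces `v = 0` because `v` has positive weight. -/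
lemma raise_pow_lower_pow_notMem_map_lower (h : IsSl2Action E F W c) {r : ℤ} {u : M}
    (hu : u ∈ W r) (hEu : E u = 0) (hu0 : u ≠ 0) {l i : ℕ} (hl : c + 2 * r = l) (hil : i ≤ l)
    {N : ℕ} (hN : W (r + 1 + N) = ⊥) : (E ^ i) ((F ^ i) u) ∉ (W (r + 1)).map F := by
  rintro ⟨w', hw', hFw'⟩
  obtain ⟨w, hw, hFw⟩ := h.exists_raise_pow_lower_pow_eq hu i i
  have hweight : c + 2 * r + i - i = l := by rw [hl, add_sub_cancel_right]
  rw [hweight, descPochhammer_eval_eq_descFactorial, Nat.sub_self, pow_zero,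
    Module.End.one_apply, ← hFw'] at hFw
  rw [add_sub_cancel_right] at hw
  have hF : F (w' - w) = (i.descFactorial i * l.descFactorial i : R) • u := by
    rw [map_sub, hFw, add_sub_cancel_left]
  have hv : w' - w ∈ W (r + 1) := sub_mem hw' hw
  have hnil : (E ^ N) (w' - w) = 0 := by
    simpa only [hN, Submodule.mem_bot] using h.raise_pow_mem hv N
  have hv0 : w' - w = 0 :=
    h.eq_zero_of_raise_lower_eq_zero hv (by rw [hF, map_smul, hEu, smul_zero]) (l := l + 1)
      (by push_cast; linear_combination hl) hnil
  rw [hv0, map_zero, eq_comm, smul_eq_zero] at hF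
  refine hF.elim ?_ hu0
  have hfac {m : ℕ} (hm : i ≤ m) : (m.descFactorial i : R) ≠ 0 :=
    Nat.cast_ne_zero.mpr fun h0 => (Nat.descFactorial_eq_zero_iff_lt.mp h0).not_ge hm
  exact mul_ne_zero (hfac le_rfl) (hfac hil)

end TorsionFree

end IsSl2Action

end Sl2

section Operators

open CliffordAlgebra (contractLeft contractRight reverse)
open ExteriorAlgebra (ι ιMulti)

variable {R M κ : Type*} [CommRing R] [AddCommGroup M] [Module R M] [Fintype κ]

/-- The operator on `Λ ⊗ Λ` moving one vector from the second factor to the end of the first. -/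
def raise (b : Module.Basis κ R M) :
    Module.End R (ExteriorAlgebra R M ⊗[R] ExteriorAlgebra R M) :=
  ∑ k, TensorProduct.map (LinearMap.mulRight R (ι R (b k))) (contractLeft (b.coord k))

/-- The operator on `Λ ⊗ Λ` moving one vector from the first factor to the start of the
second. -/
def lower (b : Module.Basis κ R M) :
    Module.End R (ExteriorAlgebra R M ⊗[R] ExteriorAlgebra R M) :=
  ∑ k, TensorProduct.map (contractRight.flip (b.coord k)) (LinearMap.mulLeft R (ι R (b k)))

lemma raise_tmul (b : Module.Basis κ R M) (x y : ExteriorAlgebra R M) :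
    raise b (x ⊗ₜ y) = ∑ k, (x * ι R (b k)) ⊗ₜ contractLeft (b.coord k) y := by
  simp [raise, LinearMap.sum_apply]

lemma lower_tmul (b : Module.Basis κ R M) (x y : ExteriorAlgebra R M) :
    lower b (x ⊗ₜ y) = ∑ k, contractRight x (b.coord k) ⊗ₜ (ι R (b k) * y) := by
  simp [lower, LinearMap.sum_apply]

/-- The involution `x ⊗ y ↦ yʳ ⊗ xʳ` of `Λ ⊗ Λ`, where `ʳ` reverses wedges. It exchanges `raise`
and `lower`. -/
def swapReverse (R M : Type*) [CommRing R] [AddCommGroup M] [Module R M] :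
    Module.End R (ExteriorAlgebra R M ⊗[R] ExteriorAlgebra R M) :=
  TensorProduct.map reverse reverse ∘ₗ (TensorProduct.comm R _ _).toLinearMap

lemma swapReverse_tmul (x y : ExteriorAlgebra R M) :
    swapReverse R M (x ⊗ₜ y) = reverse y ⊗ₜ reverse x := rfl

lemma swapReverse_swapReverse (z : ExteriorAlgebra R M ⊗[R] ExteriorAlgebra R M) :
    swapReverse R M (swapReverse R M z) = z := by
  induction z with
  | zero => simp
  | add z w hz hw => rw [map_add, map_add, hz, hw]
  | tmul x y => simp only [swapReverse_tmul, ExteriorAlgebra, CliffordAlgebra.reverse_reverse]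

lemma swapReverse_raise (b : Module.Basis κ R M)
    (z : ExteriorAlgebra R M ⊗[R] ExteriorAlgebra R M) :
    swapReverse R M (raise b z) = lower b (swapReverse R M z) := by
  induction z with
  | zero => simp
  | add z w hz hw => simp only [map_add, hz, hw]
  | tmul x y =>
    simp only [raise_tmul, map_sum, swapReverse_tmul, lower_tmul,
      CliffordAlgebra.contractRight_eq, ι, ExteriorAlgebra, CliffordAlgebra.reverse.map_mul,
      CliffordAlgebra.reverse_ι, CliffordAlgebra.reverse_reverse]

lemma swapReverse_raise_pow (b : Module.Basis κ R M) (m : ℕ)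
    (z : ExteriorAlgebra R M ⊗[R] ExteriorAlgebra R M) :
    swapReverse R M ((raise b ^ m) z) = (lower b ^ m) (swapReverse R M z) :=
  have hcomm : lower b ∘ₗ swapReverse R M = swapReverse R M ∘ₗ raise b :=
    LinearMap.ext fun z => (swapReverse_raise b z).symm
  (LinearMap.congr_fun (Module.End.commute_pow_left_of_commute hcomm m) z).symm

lemma reverse_ιMulti {s : ℕ} (v : Fin s → M) :
    reverse (Q := (0 : QuadraticForm R M)) (ιMulti R s v) = ιMulti R s (v ∘ Fin.rev) := by
  have h := CliffordAlgebra.reverse_prod_map_ι (Q := (0 : QuadraticForm R M)) (List.ofFn v)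
  rw [List.map_ofFn] at h
  rw [ExteriorAlgebra.ιMulti_apply, ExteriorAlgebra.ιMulti_apply]
  refine h.trans (congrArg List.prod (List.ext_getElem (by simp) fun i hi _ => ?_))
  simp [Fin.rev, ι, Nat.sub_sub, add_comm]

lemma swapReverse_ιMulti_tmul_ιMulti {s t : ℕ} (v : Fin s → M) (w : Fin t → M) :
    swapReverse R M (ιMulti R s v ⊗ₜ ιMulti R t w) =
      ιMulti R t (w ∘ Fin.rev) ⊗ₜ ιMulti R s (v ∘ Fin.rev) := by
  rw [swapReverse_tmul, reverse_ιMulti, reverse_ιMulti]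

lemma ιMulti_cons {s : ℕ} (x : M) (v : Fin s → M) :
    ιMulti R (s + 1) (Fin.cons x v) = ι R x * ιMulti R s v := by
  simp only [ExteriorAlgebra.ιMulti_apply, List.ofFn_succ, Fin.cons_zero, Fin.cons_succ,
    List.prod_cons]

lemma ιMulti_snoc {s : ℕ} (v : Fin s → M) (x : M) :
    ιMulti R (s + 1) (Fin.snoc v x) = ιMulti R s v * ι R x := by
  simp only [ExteriorAlgebra.ιMulti_apply, List.ofFn_succ', List.concat_eq_append,
    List.prod_append, List.prod_singleton, Fin.snoc_castSucc, Fin.snoc_last]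

lemma ι_mul_ιMulti_removeNth {t : ℕ} (w : Fin (t + 1) → M) (j : Fin (t + 1)) :
    ι R (w j) * ιMulti R t (j.removeNth w) = (-1 : ℤ) ^ (j : ℕ) • ιMulti R (t + 1) w := by
  rw [← ιMulti_cons, ← Matrix.vecCons, ← AlternatingMap.neg_one_pow_smul_map_insertNth,
    Fin.insertNth_self_removeNth]

lemma contractLeft_ιMulti (d : Module.Dual R M) {t : ℕ} (w : Fin (t + 1) → M) :
    contractLeft (Q := 0) d (ιMulti R (t + 1) w) =
      ∑ j : Fin (t + 1), (-1 : ℤ) ^ (j : ℕ) • d (w j) • ιMulti R t (j.removeNth w) := by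
  induction t with
  | zero => simp [ExteriorAlgebra.ιMulti_succ_apply, ι, Algebra.algebraMap_eq_smul_one]
  | succ t ih =>
    induction w using Fin.consCases with
    | cons x w =>
      rw [ιMulti_cons, ι, CliffordAlgebra.contractLeft_ι_mul, ih, Finset.mul_sum, sub_eq_add_neg,
        ← Finset.sum_neg_distrib, Fin.sum_univ_succ (n := t + 1)]
      congr 1
      · simp
      · refine Finset.sum_congr rfl fun j _ => ?_
        have hcons : j.succ.removeNth (Fin.cons x w : Fin (t + 2) → M) =
            Fin.cons x (j.removeNth w) := by
          ext i
          cases i using Fin.cases <;> simp [Fin.removeNth]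
        rw [hcons, ιMulti_cons, Fin.cons_succ, Fin.val_succ, pow_succ, mul_neg_one, neg_smul,
          mul_smul_comm, mul_smul_comm]

lemma raise_tmul_ιMulti (b : Module.Basis κ R M) (x : ExteriorAlgebra R M) {t : ℕ}
    (w : Fin (t + 1) → M) :
    raise b (x ⊗ₜ ιMulti R (t + 1) w) =
      ∑ j : Fin (t + 1), (-1 : ℤ) ^ (j : ℕ) •
        (x * ι R (w j)) ⊗ₜ[R] ιMulti R t (j.removeNth w) := by
  simp only [raise_tmul, contractLeft_ιMulti, TensorProduct.tmul_sum]
  rw [Finset.sum_comm]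
  refine Finset.sum_congr rfl fun j _ => ?_
  conv_rhs => rw [← b.sum_repr (w j)]
  simp only [map_sum, map_smul, Finset.mul_sum, TensorProduct.sum_tmul, Finset.smul_sum,
    mul_smul_comm, ← TensorProduct.smul_tmul', TensorProduct.tmul_smul,
    Module.Basis.coord_apply]

lemma sum_ι_mul_contractLeft_ιMulti (b : Module.Basis κ R M) {q : ℕ} (w : Fin q → M) :
    ∑ k, ι R (b k) * contractLeft (b.coord k) (ιMulti R q w) = (q : R) • ιMulti R q w := by
  cases q with
  | zero => simp
  | succ q =>
    simp only [contractLeft_ιMulti, Finset.mul_sum]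
    rw [Finset.sum_comm]
    have hterm (j : Fin (q + 1)) : ∑ k, ι R (b k) *
        ((-1 : ℤ) ^ (j : ℕ) • b.coord k (w j) • ιMulti R q (j.removeNth w)) =
          ιMulti R (q + 1) w := by
      have hw : ∑ k, b.coord k (w j) • ι R (b k) = ι R (w j) := by
        simp only [← map_smul, ← map_sum, Module.Basis.coord_apply, b.sum_repr]
      simp only [mul_smul_comm, ← Finset.smul_sum, ← smul_mul_assoc, ← Finset.sum_mul]
      rw [smul_mul_assoc, hw, ι_mul_ιMulti_removeNth, smul_smul, ← mul_pow]
      simp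
    simp only [hterm, Finset.sum_const, Finset.card_univ, Fintype.card_fin,
      Nat.cast_smul_eq_nsmul]

lemma sum_contractRight_ιMulti_mul_ι (b : Module.Basis κ R M) {p : ℕ} (v : Fin p → M) :
    ∑ k, contractRight (ιMulti R p v) (b.coord k) * ι R (b k) = (p : R) • ιMulti R p v := by
  have h := congrArg (reverse (Q := (0 : QuadraticForm R M)))
    (sum_ι_mul_contractLeft_ιMulti b (v ∘ Fin.rev))
  rw [← reverse_ιMulti] at h
  simpa only [map_sum, map_smul, ι, ExteriorAlgebra, CliffordAlgebra.reverse.map_mul,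
    CliffordAlgebra.reverse_ι, ← CliffordAlgebra.contractRight_eq,
    CliffordAlgebra.reverse_reverse] using h

lemma raise_lower_tmul (b : Module.Basis κ R M) (x y : ExteriorAlgebra R M) :
    raise b (lower b (x ⊗ₜ y)) = lower b (raise b (x ⊗ₜ y)) +
      (∑ k, contractRight x (b.coord k) * ι R (b k)) ⊗ₜ y -
      x ⊗ₜ (∑ k, ι R (b k) * contractLeft (b.coord k) y) := by
  classical
  simp only [raise_tmul, lower_tmul, map_sum, ι, CliffordAlgebra.contractLeft_ι_mul,
    CliffordAlgebra.contractRight_mul_ι, TensorProduct.tmul_sub, TensorProduct.sub_tmul,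
    TensorProduct.sum_tmul, TensorProduct.tmul_sum, Finset.sum_sub_distrib,
    Module.Basis.coord_apply, Module.Basis.repr_self, Finsupp.single_apply, ite_smul, one_smul,
    zero_smul, TensorProduct.tmul_ite, TensorProduct.ite_tmul, Finset.sum_ite_eq,
    Finset.mem_univ, if_true]
  rw [Finset.sum_comm]
  abel

/-- The bihomogeneous part of `Λ ⊗ Λ` of degree `(p, q)`, which is zero unless `p` and `q` are
nonnegative. -/
def bidegree (R M : Type*) [CommRing R] [AddCommGroup M] [Module R M] (p q : ℤ) :
    Submodule R (ExteriorAlgebra R M ⊗[R] ExteriorAlgebra R M) :=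
  Submodule.span R {z | ∃ (s t : ℕ) (v : Fin s → M) (w : Fin t → M),
    (s : ℤ) = p ∧ (t : ℤ) = q ∧ ιMulti R s v ⊗ₜ ιMulti R t w = z}

lemma ιMulti_tmul_ιMulti_mem_bidegree {p q : ℤ} {s t : ℕ} (hp : (s : ℤ) = p) (hq : (t : ℤ) = q)
    (v : Fin s → M) (w : Fin t → M) : ιMulti R s v ⊗ₜ ιMulti R t w ∈ bidegree R M p q :=
  Submodule.subset_span ⟨s, t, v, w, hp, hq, rfl⟩

lemma bidegree_le {p q : ℤ} {N : Submodule R (ExteriorAlgebra R M ⊗[R] ExteriorAlgebra R M)}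
    (h : ∀ (s t : ℕ) (v : Fin s → M) (w : Fin t → M), (s : ℤ) = p → (t : ℤ) = q →
      ιMulti R s v ⊗ₜ ιMulti R t w ∈ N) : bidegree R M p q ≤ N :=
  Submodule.span_le.mpr (by rintro _ ⟨s, t, v, w, hp, hq, rfl⟩; exact h s t v w hp hq)

lemma bidegree_eq_bot {p q : ℤ} (hq : q < 0) : bidegree R M p q = ⊥ :=
  le_bot_iff.mp (bidegree_le fun _ t _ _ _ ht => absurd ht (by omega))

lemma raise_mem_bidegree (b : Module.Basis κ R M) {p q : ℤ}
    {z : ExteriorAlgebra R M ⊗[R] ExteriorAlgebra R M} (hz : z ∈ bidegree R M p q) :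
    raise b z ∈ bidegree R M (p + 1) (q - 1) := by
  suffices h : bidegree R M p q ≤ (bidegree R M (p + 1) (q - 1)).comap (raise b) from h hz
  refine bidegree_le fun s t v w hs ht => ?_
  rw [Submodule.mem_comap]
  cases t with
  | zero => simp [raise_tmul]
  | succ t =>
    rw [raise_tmul_ιMulti]
    refine sum_mem fun j _ => zsmul_mem ?_ _
    rw [← ιMulti_snoc]
    exact ιMulti_tmul_ιMulti_mem_bidegree (by omega) (by omega) _ _

lemma swapReverse_mem_bidegree {p q : ℤ} {z : ExteriorAlgebra R M ⊗[R] ExteriorAlgebra R M}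
    (hz : z ∈ bidegree R M p q) : swapReverse R M z ∈ bidegree R M q p := by
  suffices h : bidegree R M p q ≤ (bidegree R M q p).comap (swapReverse R M) from h hz
  refine bidegree_le fun s t v w hs ht => ?_
  rw [Submodule.mem_comap, swapReverse_ιMulti_tmul_ιMulti]
  exact ιMulti_tmul_ιMulti_mem_bidegree ht hs _ _

lemma lower_mem_bidegree (b : Module.Basis κ R M) {p q : ℤ}
    {z : ExteriorAlgebra R M ⊗[R] ExteriorAlgebra R M} (hz : z ∈ bidegree R M p q) :
    lower b z ∈ bidegree R M (p - 1) (q + 1) := by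
  rw [← swapReverse_swapReverse z, ← swapReverse_raise]
  exact swapReverse_mem_bidegree (raise_mem_bidegree b (swapReverse_mem_bidegree hz))

lemma raise_lower_of_mem_bidegree (b : Module.Basis κ R M) {p q : ℤ}
    {z : ExteriorAlgebra R M ⊗[R] ExteriorAlgebra R M} (hz : z ∈ bidegree R M p q) :
    raise b (lower b z) = lower b (raise b z) + ((p : R) - q) • z := by
  suffices h : bidegree R M p q ≤ LinearMap.eqLocus (raise b * lower b)
      (lower b * raise b + ((p : R) - q) • 1) from h hz
  refine bidegree_le fun s t v w hs ht => ?_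
  rw [LinearMap.mem_eqLocus, Module.End.mul_apply, raise_lower_tmul,
    sum_contractRight_ιMulti_mul_ι, sum_ι_mul_contractLeft_ιMulti, ← hs, ← ht]
  simp only [LinearMap.add_apply, Module.End.mul_apply, LinearMap.smul_apply,
    Module.End.one_apply, ← TensorProduct.smul_tmul', TensorProduct.tmul_smul, Int.cast_natCast]
  module

lemma isSl2Action_raise_lower (e : Module.Basis κ R M) (a b : ℤ) :
    IsSl2Action (raise e) (lower e) (fun r => bidegree R M (a + r) (b - r)) ((a : R) - b) where
  raise_mem hz := by
    simpa only [add_assoc, sub_sub] using raise_mem_bidegree e hz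
  lower_mem hz := by
    simpa only [add_sub_assoc, sub_add] using lower_mem_bidegree e hz
  raise_lower hz := by
    rw [raise_lower_of_mem_bidegree e hz]
    push_cast
    module

end Operators

section Comultiplication

open Equiv (Perm)
open ExteriorAlgebra (ιMulti)

/-- The permutation of `Fin (s + t)` acting by `α` on the first `s` and by `β` on the last `t`
indices. -/
def blockPerm {s t : ℕ} (α : Perm (Fin s)) (β : Perm (Fin t)) : Perm (Fin (s + t)) :=
  finSumFinEquiv.permCongr (Perm.sumCongr α β)

section BlockPerm

variable {s t : ℕ} (α : Perm (Fin s)) (β : Perm (Fin t))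

@[simp]
lemma blockPerm_castAdd (i : Fin s) :
    blockPerm α β (Fin.castAdd t i) = Fin.castAdd t (α i) := by
  simp [blockPerm, Equiv.permCongr_apply]

@[simp]
lemma blockPerm_natAdd (i : Fin t) :
    blockPerm α β (Fin.natAdd s i) = Fin.natAdd s (β i) := by
  simp [blockPerm, Equiv.permCongr_apply]

@[simp]
lemma sign_blockPerm : (blockPerm α β).sign = α.sign * β.sign := by
  simp [blockPerm]

end BlockPerm

section Shuffles

variable {s t : ℕ} {σ : Perm (Fin (s + t))}

lemma strictMono_of_mem_shuffles_left (hσ : σ ∈ shuffles s t) :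
    StrictMono fun i => σ (Fin.castAdd t i) :=
  fun i j hij => (Finset.mem_filter.mp hσ).2.1 _ _ hij (by simp)

lemma strictMono_of_mem_shuffles_right (hσ : σ ∈ shuffles s t) :
    StrictMono fun i => σ (Fin.natAdd s i) :=
  fun i j hij => (Finset.mem_filter.mp hσ).2.2 _ _ (by simpa using hij) (by simp)

lemma mem_shuffles (hl : StrictMono fun i => σ (Fin.castAdd t i))
    (hr : StrictMono fun i => σ (Fin.natAdd s i)) : σ ∈ shuffles s t := by
  refine Finset.mem_filter.mpr ⟨Finset.mem_univ _, fun i j hij hj => ?_, fun i j hij hi => ?_⟩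
  · have := @hl ⟨i, by omega⟩ ⟨j, hj⟩ (by simpa using hij)
    simpa using this
  · have hi' : Fin.natAdd s ⟨i - s, by omega⟩ = i := Fin.ext (by simp; omega)
    have hj' : Fin.natAdd s ⟨j - s, by omega⟩ = j := Fin.ext (by simp; omega)
    simpa only [hi', hj'] using @hr ⟨i - s, by omega⟩ ⟨j - s, by omega⟩ (by simp; omega)

lemma eq_of_strictMono_comp_perm {α : Type*} [LinearOrder α] {m : ℕ} {f g : Fin m → α}
    (hf : StrictMono f) (hg : StrictMono g) {σ τ : Perm (Fin m)} (h : f ∘ σ = g ∘ τ) :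
    f = g ∧ σ = τ := by
  have hfg : f = g := by
    refine (StrictMono.range_inj hf hg).mp ?_
    rw [← σ.surjective.range_comp f, h, τ.surjective.range_comp]
  exact ⟨hfg, Equiv.ext fun i => hg.injective (by simpa [hfg] using congrFun h i)⟩

lemma eq_of_mul_blockPerm_eq {τ : Perm (Fin (s + t))} (hσ : σ ∈ shuffles s t)
    (hτ : τ ∈ shuffles s t) {α α' : Perm (Fin s)} {β β' : Perm (Fin t)}
    (h : σ * blockPerm α β = τ * blockPerm α' β') : σ = τ ∧ α = α' ∧ β = β' := by
  obtain ⟨-, rfl⟩ := eq_of_strictMono_comp_perm (σ := α) (τ := α')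
    (strictMono_of_mem_shuffles_left hσ) (strictMono_of_mem_shuffles_left hτ)
    (funext fun i => by simpa using Equiv.congr_fun h (Fin.castAdd t i))
  obtain ⟨-, rfl⟩ := eq_of_strictMono_comp_perm (σ := β) (τ := β')
    (strictMono_of_mem_shuffles_right hσ) (strictMono_of_mem_shuffles_right hτ)
    (funext fun i => by simpa using Equiv.congr_fun h (Fin.natAdd s i))
  exact ⟨mul_right_cancel h, rfl, rfl⟩

lemma exists_mul_blockPerm_eq (σ : Perm (Fin (s + t))) :
    ∃ τ ∈ shuffles s t, ∃ α β, τ * blockPerm α β = σ := by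
  let α := Tuple.sort fun i => σ (Fin.castAdd t i)
  let β := Tuple.sort fun i => σ (Fin.natAdd s i)
  refine ⟨σ * blockPerm α β, mem_shuffles ?_ ?_, α⁻¹, β⁻¹, ?_⟩
  · simp only [Perm.mul_apply, blockPerm_castAdd]
    exact (Tuple.monotone_sort fun i => σ (Fin.castAdd t i)).strictMono_of_injective
      (σ.injective.comp ((Fin.castAdd_injective s t).comp α.injective))
  · simp only [Perm.mul_apply, blockPerm_natAdd]
    exact (Tuple.monotone_sort fun i => σ (Fin.natAdd s i)).strictMono_of_injective
      (σ.injective.comp ((Fin.natAdd_injective t s).comp β.injective))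
  · refine Equiv.ext fun i => ?_
    cases i using Fin.addCases <;> simp

lemma sum_perm_eq_sum_shuffles {A : Type*} [AddCommMonoid A] (s t : ℕ)
    (f : Perm (Fin (s + t)) → A) :
    ∑ σ, f σ = ∑ σ ∈ shuffles s t, ∑ p : Perm (Fin s) × Perm (Fin t),
      f (σ * blockPerm p.1 p.2) := by
  rw [← Finset.sum_product']
  symm
  refine Finset.sum_bij (fun x _ => x.1 * blockPerm x.2.1 x.2.2) (fun _ _ => Finset.mem_univ _)
    ?_ ?_ fun _ _ => rfl
  · rintro ⟨σ, α, β⟩ hσ ⟨τ, α', β'⟩ hτ h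
    obtain ⟨rfl, rfl, rfl⟩ := eq_of_mul_blockPerm_eq (Finset.mem_product.mp hσ).1
      (Finset.mem_product.mp hτ).1 h
    rfl
  · intro σ _
    obtain ⟨τ, hτ, α, β, h⟩ := exists_mul_blockPerm_eq σ
    exact ⟨(τ, α, β), Finset.mem_product.mpr ⟨hτ, Finset.mem_univ _⟩, h⟩

end Shuffles

section SplitTmul

variable {R M κ : Type*} [CommRing R] [AddCommGroup M] [Module R M] [Fintype κ] {N s t : ℕ}

/-- `(v_1 ∧ ⋯ ∧ v_s) ⊗ (v_{s+1} ∧ ⋯ ∧ v_N)` for `N = s + t`; the length `N` is kept apart from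
`s + t` so that the same family can be split in different places. -/
def splitTmul (R : Type*) [CommRing R] [Module R M] (h : s + t = N) (v : Fin N → M) :
    ExteriorAlgebra R M ⊗[R] ExteriorAlgebra R M :=
  ιMulti R s (fun i => v (Fin.cast h (Fin.castAdd t i))) ⊗ₜ
    ιMulti R t (fun i => v (Fin.cast h (Fin.natAdd s i)))

/-- The antisymmetrization over all permutations of the tensors `splitTmul R h v`. It is `s! t!`
times the sum over shuffles, but unlike the latter it is a sum over a group. -/
def permSum (R : Type*) [CommRing R] [Module R M] (h : s + t = N) (v : Fin N → M) :
    ExteriorAlgebra R M ⊗[R] ExteriorAlgebra R M :=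
  ∑ σ : Perm (Fin N), (σ.sign : ℤ) • splitTmul R h (v ∘ σ)

lemma splitTmul_comp_blockPerm (v : Fin (s + t) → M) (α : Perm (Fin s)) (β : Perm (Fin t)) :
    splitTmul R rfl (v ∘ blockPerm α β) =
      ((blockPerm α β).sign : ℤ) • splitTmul R rfl v := by
  have hα := (ιMulti R s).map_perm (fun i => v (Fin.castAdd t i)) α
  have hβ := (ιMulti R t).map_perm (fun i => v (Fin.natAdd s i)) β
  simp only [Function.comp_def, Units.smul_def] at hα hβ
  simp only [splitTmul, Function.comp_apply, Fin.cast_refl, id_eq, blockPerm_castAdd,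
    blockPerm_natAdd, hα, hβ, sign_blockPerm, Units.val_mul, mul_smul]
  rw [TensorProduct.tmul_smul, ← TensorProduct.smul_tmul', smul_comm]

lemma sum_sign_smul_apply_mul {A : Type*} [AddCommGroup A] (f : Perm (Fin N) → A)
    (τ : Perm (Fin N)) :
    ∑ σ : Perm (Fin N), (σ.sign : ℤ) • (τ.sign : ℤ) • f (σ * τ) =
      ∑ σ : Perm (Fin N), (σ.sign : ℤ) • f σ :=
  Fintype.sum_equiv (Equiv.mulRight τ) _ _ fun σ => by
    rw [Equiv.coe_mulRight, Perm.sign_mul, Units.val_mul, mul_smul]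

lemma permSum_eq_sum_shuffles (v : Fin (s + t) → M) :
    permSum R rfl v =
      (s.factorial * t.factorial : R) •
        ∑ σ ∈ shuffles s t, (σ.sign : ℤ) • splitTmul R rfl (v ∘ σ) := by
  have hterm (σ : Perm (Fin (s + t))) (α : Perm (Fin s)) (β : Perm (Fin t)) :
      ((σ * blockPerm α β).sign : ℤ) • splitTmul R rfl (v ∘ ⇑(σ * blockPerm α β)) =
        (σ.sign : ℤ) • splitTmul R rfl (v ∘ σ) := by
    rw [Perm.coe_mul, ← Function.comp_assoc, splitTmul_comp_blockPerm, Perm.sign_mul,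
      Units.val_mul, smul_smul, mul_assoc, Int.units_coe_mul_self, mul_one]
  rw [permSum, sum_perm_eq_sum_shuffles, Finset.smul_sum]
  refine Finset.sum_congr rfl fun σ _ => ?_
  simp only [hterm, Finset.sum_const, Finset.card_univ, Fintype.card_prod, Fintype.card_perm,
    Fintype.card_fin, ← Nat.cast_smul_eq_nsmul R, Nat.cast_mul]

lemma raise_splitTmul (e : Module.Basis κ R M) (v : Fin (s + (t + 1)) → M) :
    raise e (splitTmul R rfl v) =
      ∑ j : Fin (t + 1), ((blockPerm (1 : Perm (Fin s)) j.cycleRange.symm).sign : ℤ) •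
        splitTmul R (Nat.succ_add_eq_add_succ s t) (v ∘ blockPerm 1 j.cycleRange.symm) := by
  have hl (i : Fin s) : Fin.cast (Nat.succ_add_eq_add_succ s t) (Fin.castAdd t i.castSucc) =
      Fin.castAdd (t + 1) i := rfl
  have hm : Fin.cast (Nat.succ_add_eq_add_succ s t) (Fin.castAdd t (Fin.last s)) =
      Fin.natAdd s 0 := rfl
  have hr (i : Fin t) : Fin.cast (Nat.succ_add_eq_add_succ s t) (Fin.natAdd (s + 1) i) =
      Fin.natAdd s i.succ := Fin.ext (by simp; omega)
  rw [splitTmul, raise_tmul_ιMulti]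
  refine Finset.sum_congr rfl fun j _ => ?_
  rw [sign_blockPerm, Perm.sign_one, one_mul, Perm.sign_symm, Fin.sign_cycleRange, ← ιMulti_snoc,
    splitTmul]
  push_cast
  congr 3
  · ext i
    cases i using Fin.lastCases <;> simp [hl, hm]
  · ext i
    simp [hr, Fin.removeNth]

lemma raise_permSum (e : Module.Basis κ R M) (h : s + (t + 1) = N) (h' : s + 1 + t = N)
    (v : Fin N → M) : raise e (permSum R h v) = (t + 1 : R) • permSum R h' v := by
  subst h
  simp only [permSum, map_sum, map_zsmul, raise_splitTmul, Finset.smul_sum]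
  rw [Finset.sum_comm]
  simp only [Function.comp_assoc, ← Perm.coe_mul]
  simp only [sum_sign_smul_apply_mul (fun σ => splitTmul R h' (v ∘ σ)), Finset.sum_const,
    Finset.card_univ, Fintype.card_fin, ← Finset.smul_sum,
    ← Nat.cast_smul_eq_nsmul R, Nat.cast_add_one]

lemma permSum_zero_left (h : 0 + N = N) (v : Fin N → M) :
    permSum R h v = (N.factorial : R) • (1 ⊗ₜ ιMulti R N v) := by
  have hterm (σ : Perm (Fin N)) :
      (σ.sign : ℤ) • splitTmul R h (v ∘ σ) = 1 ⊗ₜ ιMulti R N v := by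
    have hcast (i : Fin N) : Fin.cast h (Fin.natAdd 0 i) = i := by ext; simp
    have hσ := (ιMulti R N).map_perm v σ
    rw [splitTmul, ExteriorAlgebra.ιMulti_zero_apply]
    simp only [hcast]
    rw [hσ, Units.smul_def, TensorProduct.tmul_smul, smul_smul, Int.units_coe_mul_self, one_smul]
  simp only [permSum, hterm, Finset.sum_const, Finset.card_univ, Fintype.card_perm,
    Fintype.card_fin, Nat.cast_smul_eq_nsmul]

lemma swapReverse_permSum (h : s + t = N) (h' : t + s = N) (v : Fin N → M) :
    swapReverse R M (permSum R h v) = permSum R h' (v ∘ Fin.rev) := by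
  have hrev {s t : ℕ} (h : s + t = N) (h' : t + s = N) (i : Fin s) :
      Fin.rev (Fin.cast h' (Fin.natAdd t i)) = Fin.cast h (Fin.castAdd t i.rev) := by
    ext
    simp
    omega
  have hrev' {s t : ℕ} (h : s + t = N) (h' : t + s = N) (i : Fin s) :
      Fin.rev (Fin.cast h (Fin.castAdd t i)) = Fin.cast h' (Fin.natAdd t i.rev) := by
    rw [Fin.rev_eq_iff, hrev h h', Fin.rev_rev]
  simp only [permSum, map_sum, map_zsmul]
  refine Fintype.sum_equiv (Equiv.permCongr Fin.revPerm) _ _ fun σ => ?_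
  rw [Perm.sign_permCongr, splitTmul, swapReverse_ιMulti_tmul_ιMulti, splitTmul]
  congr 3 <;> ext i <;> simp [hrev h h', hrev' h' h]

end SplitTmul

section CharZero

variable {K M κ : Type*} [Field K] [CharZero K] [AddCommGroup M] [Module K M] [Fintype κ]
  (e : Module.Basis κ K M)

lemma factorial_smul_raise_pow {N s t : ℕ} (h : s + t = N) (v : Fin N → M) :
    (t.factorial : K) • (raise e ^ s) (1 ⊗ₜ ιMulti K N v) = permSum K h v := by
  induction s generalizing t with
  | zero =>
    obtain rfl : t = N := by omega
    rw [permSum_zero_left, pow_zero, Module.End.one_apply]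
  | succ s ih =>
    have key := congrArg (raise e) (ih (t := t + 1) (by omega))
    rw [raise_permSum e _ h, map_smul, Nat.factorial_succ, ← Module.End.mul_apply, ← pow_succ',
      Nat.cast_mul, mul_smul, Nat.cast_add_one] at key
    exact smul_right_injective _ (Nat.cast_add_one_ne_zero t) key

lemma factorial_smul_lower_pow {N s t : ℕ} (h : s + t = N) (v : Fin N → M) :
    (s.factorial : K) • (lower e ^ t) (ιMulti K N v ⊗ₜ 1) = permSum K h v := by
  have hrev := congrArg (swapReverse K M)
    (factorial_smul_raise_pow e ((add_comm t s).trans h) (v ∘ Fin.rev))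
  rw [swapReverse_permSum _ h, map_smul, swapReverse_raise_pow, swapReverse_tmul,
    reverse_ιMulti] at hrev
  simpa [Function.comp_assoc, Fin.rev_involutive.comp_self] using hrev

lemma raise_pow_one_tmul_ιMulti {s t : ℕ} (v : Fin (s + t) → M) :
    (raise e ^ s) (1 ⊗ₜ ιMulti K (s + t) v) =
      (s.factorial : K) • ∑ σ ∈ shuffles s t, (σ.sign : ℤ) • splitTmul K rfl (v ∘ σ) := by
  have ht : (t.factorial : K) ≠ 0 := Nat.cast_ne_zero.mpr t.factorial_ne_zero
  refine smul_right_injective _ ht ?_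
  simp only
  rw [factorial_smul_raise_pow e rfl, permSum_eq_sum_shuffles, smul_smul, mul_comm]

lemma lower_pow_ιMulti_tmul_one {s t : ℕ} (v : Fin (s + t) → M) :
    (lower e ^ t) (ιMulti K (s + t) v ⊗ₜ 1) =
      (t.factorial : K) • ∑ σ ∈ shuffles s t, (σ.sign : ℤ) • splitTmul K rfl (v ∘ σ) := by
  have hs : (s.factorial : K) ≠ 0 := Nat.cast_ne_zero.mpr s.factorial_ne_zero
  refine smul_right_injective _ hs ?_
  simp only
  rw [factorial_smul_lower_pow e rfl, permSum_eq_sum_shuffles, smul_smul]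

end CharZero

end Comultiplication

section Inclusion

open ExteriorAlgebra (ιMulti)

variable {R M κ : Type*} [CommRing R] [AddCommGroup M] [Module R M] [Fintype κ]

/-- The map `Λ^p ⊗ Λ^q → Λ ⊗ Λ` induced by the inclusions of the homogeneous parts. -/
def incl (R M : Type*) [CommRing R] [AddCommGroup M] [Module R M] (p q : ℕ) :
    ⋀[R]^p M ⊗[R] ⋀[R]^q M →ₗ[R] ExteriorAlgebra R M ⊗[R] ExteriorAlgebra R M :=
  TensorProduct.map (Submodule.subtype _) (Submodule.subtype _)

@[simp]
lemma incl_tmul {p q : ℕ} (x : ⋀[R]^p M) (y : ⋀[R]^q M) :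
    incl R M p q (x ⊗ₜ y) = (x : ExteriorAlgebra R M) ⊗ₜ (y : ExteriorAlgebra R M) :=
  rfl

lemma bidegree_natCast (p q : ℕ) :
    bidegree R M p q = Submodule.map₂ (TensorProduct.mk R _ _) (⋀[R]^p M) (⋀[R]^q M) := by
  rw [← ExteriorAlgebra.ιMulti_span_fixedDegree, ← ExteriorAlgebra.ιMulti_span_fixedDegree,
    Submodule.map₂_span_span, Set.image2_range]
  refine le_antisymm (bidegree_le fun s t v w hs ht => ?_) (Submodule.span_le.mpr ?_)
  · obtain rfl : s = p := by exact_mod_cast hs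
    obtain rfl : t = q := by exact_mod_cast ht
    exact Submodule.subset_span ⟨(v, w), rfl⟩
  · rintro _ ⟨⟨v, w⟩, rfl⟩
    exact ιMulti_tmul_ιMulti_mem_bidegree rfl rfl v w

lemma range_incl (p q : ℕ) : LinearMap.range (incl R M p q) = bidegree R M p q := by
  rw [bidegree_natCast]
  apply le_antisymm
  · rintro _ ⟨z, rfl⟩
    induction z with
    | zero => simp
    | tmul x y => exact Submodule.apply_mem_map₂ _ x.2 y.2
    | add x y hx hy => simpa only [map_add] using add_mem hx hy
  · exact Submodule.map₂_le.mpr fun x hx y hy => ⟨(⟨x, hx⟩ : ⋀[R]^p M) ⊗ₜ ⟨y, hy⟩, rfl⟩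

lemma incl_mem_bidegree {p q : ℕ} (z : ⋀[R]^p M ⊗[R] ⋀[R]^q M) :
    incl R M p q z ∈ bidegree R M p q :=
  range_incl (R := R) (M := M) p q ▸ LinearMap.mem_range_self _ z

lemma incl_injective {K M : Type*} [Field K] [AddCommGroup M] [Module K M] (p q : ℕ) :
    Function.Injective (incl K M p q) :=
  TensorProduct.map_injective_of_flat_flat _ _ (Submodule.subtype_injective _)
    (Submodule.subtype_injective _)

lemma raise_pow_tmul (b : Module.Basis κ R M) (s : ℕ) (x y : ExteriorAlgebra R M) :
    (raise b ^ s) (x ⊗ₜ y) =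
      TensorProduct.map (LinearMap.mulLeft R x) LinearMap.id ((raise b ^ s) (1 ⊗ₜ y)) := by
  have h : Commute (raise b) (TensorProduct.map (LinearMap.mulLeft R x) LinearMap.id) :=
    TensorProduct.ext' fun u w => by simp [raise_tmul, mul_assoc]
  simpa using LinearMap.congr_fun (h.pow_left s).eq (1 ⊗ₜ y)

lemma lower_pow_tmul (b : Module.Basis κ R M) (s : ℕ) (x y : ExteriorAlgebra R M) :
    (lower b ^ s) (x ⊗ₜ y) =
      TensorProduct.map LinearMap.id (LinearMap.mulRight R y) ((lower b ^ s) (x ⊗ₜ 1)) := by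
  have h : Commute (lower b) (TensorProduct.map LinearMap.id (LinearMap.mulRight R y)) :=
    TensorProduct.ext' fun u w => by simp [lower_tmul, mul_assoc]
  simpa using LinearMap.congr_fun (h.pow_left s).eq (x ⊗ₜ 1)

end Inclusion

section HighestWeightVector

open ExteriorAlgebra (ι ιMulti)

variable {R M κ : Type*} [CommRing R] [AddCommGroup M] [Module R M]

lemma ιMulti_mul_ι_eq_zero {s : ℕ} (v : Fin s → M) (j : Fin s) :
    ιMulti R s v * ι R (v j) = 0 := by
  rw [← ιMulti_snoc]
  exact (ιMulti R (s + 1)).map_eq_zero_of_eq _ (i := j.castSucc) (j := Fin.last s) (by simp)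
    (Fin.castSucc_lt_last j).ne

lemma raise_ιMulti_tmul_ιMulti_eq_zero [Fintype κ] (b : Module.Basis κ R M) {p q : ℕ}
    (v : Fin p → M) (w : Fin q → M) (h : Set.range w ⊆ Set.range v) :
    raise b (ιMulti R p v ⊗ₜ ιMulti R q w) = 0 := by
  cases q with
  | zero => simp [raise_tmul]
  | succ q =>
    rw [raise_tmul_ιMulti]
    refine Finset.sum_eq_zero fun j _ => ?_
    obtain ⟨i, hi⟩ := h (Set.mem_range_self j)
    rw [← hi, ιMulti_mul_ι_eq_zero, TensorProduct.zero_tmul, smul_zero]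

lemma ιMulti_basis_tmul_ιMulti_basis_ne_zero [Nontrivial R] [LinearOrder κ]
    (b : Module.Basis κ R M) {p q : ℕ} (f : Fin p ↪o κ) (g : Fin q ↪o κ) :
    exteriorPower.ιMulti R p (b ∘ f) ⊗ₜ[R] exteriorPower.ιMulti R q (b ∘ g) ≠ 0 := by
  have h := ((b.exteriorPower p).tensorProduct (b.exteriorPower q)).ne_zero
    (Set.powersetCard.ofFinEmbEquiv f, Set.powersetCard.ofFinEmbEquiv g)
  simpa [exteriorPower.ιMulti_family] using h

lemma exists_mem_bidegree_raise_eq_zero {K M : Type*} [Field K] [AddCommGroup M] [Module K M]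
    {n : ℕ} (e : Module.Basis (Fin n) K M) {p q : ℕ} (hqp : q ≤ p) (hpn : p ≤ n) :
    ∃ u ∈ bidegree K M p q, raise e u = 0 ∧ u ≠ 0 := by
  let f := Fin.castLEOrderEmb hpn
  let g := Fin.castLEOrderEmb (hqp.trans hpn)
  refine ⟨ιMulti K p (e ∘ f) ⊗ₜ ιMulti K q (e ∘ g),
    ιMulti_tmul_ιMulti_mem_bidegree rfl rfl _ _, raise_ιMulti_tmul_ιMulti_eq_zero e _ _ ?_,
    (map_ne_zero_iff _ (incl_injective p q)).mpr
      (ιMulti_basis_tmul_ιMulti_basis_ne_zero e f g)⟩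
  rintro _ ⟨j, rfl⟩
  exact ⟨Fin.castLE hqp j, rfl⟩

end HighestWeightVector

section Wedge

open ExteriorAlgebra (ιMulti)

variable {K : Type} [Field K] {n : ℕ}

lemma coe_wedge {p : ℕ} (v : Fin p → V K n) :
    (wedge K n v : ExteriorAlgebra K (V K n)) = ιMulti K p v := rfl

lemma span_range_wedge (p : ℕ) : Submodule.span K (Set.range (wedge K n (p := p))) = ⊤ :=
  exteriorPower.ιMulti_span K p (V K n)

lemma coe_ecast {p q : ℕ} (h : p = q) (x : Lam K n p) :
    (ecast K n h x : ExteriorAlgebra K (V K n)) = x := by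
  subst h
  rfl

lemma incl_congr_ecast {p q p' q' : ℕ} (hp : p = p') (hq : q = q')
    (z : Lam K n p ⊗[K] Lam K n q) :
    incl K (V K n) p' q' (TensorProduct.congr (ecast K n hp) (ecast K n hq) z) =
      incl K (V K n) p q z := by
  subst hp hq
  exact congrArg (incl K (V K n) p q) (LinearEquiv.congr_fun TensorProduct.congr_refl_refl z)

lemma IsMulMap.coe_apply {p q : ℕ} {m : Lam K n p ⊗[K] Lam K n q →ₗ[K] Lam K n (p + q)}
    (hm : IsMulMap K n p q m) (x : Lam K n p) (y : Lam K n q) :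
    (m (x ⊗ₜ y) : ExteriorAlgebra K (V K n)) = x * y := by
  suffices h : (TensorProduct.mk K _ _).compr₂ (Submodule.subtype _ ∘ₗ m) =
      (LinearMap.mul K (ExteriorAlgebra K (V K n))).compl₁₂
        (Submodule.subtype _) (Submodule.subtype _) from
    LinearMap.congr_fun₂ h x y
  refine LinearMap.ext_on_range (span_range_wedge p) fun v =>
    LinearMap.ext_on_range (span_range_wedge q) fun w => ?_
  simp [hm v w, coe_wedge, ExteriorAlgebra.ιMulti_mul_ιMulti]

lemma IsComulMap.incl_apply_wedge {s t : ℕ}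
    {D : Lam K n (s + t) →ₗ[K] Lam K n s ⊗[K] Lam K n t} (hD : IsComulMap K n s t D)
    (v : Fin (s + t) → V K n) :
    incl K (V K n) s t (D (wedge K n v)) =
      ∑ σ ∈ shuffles s t, (σ.sign : ℤ) • splitTmul K rfl (v ∘ σ) := by
  simp only [hD v, map_sum, map_zsmul, incl_tmul]
  rfl

end Wedge

section StructureMaps

variable {K κ : Type} [Field K] [CharZero K] {n : ℕ} [Fintype κ] (e : Module.Basis κ K (V K n))

section IsComulMap

variable {s t : ℕ} {D : Lam K n (s + t) →ₗ[K] Lam K n s ⊗[K] Lam K n t}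

lemma IsComulMap.factorial_smul_incl_eq_raise_pow (hD : IsComulMap K n s t D)
    (x : Lam K n (s + t)) :
    (s.factorial : K) • incl K (V K n) s t (D x) =
      (raise e ^ s) (1 ⊗ₜ (x : ExteriorAlgebra K (V K n))) := by
  suffices h : (s.factorial : K) • incl K (V K n) s t ∘ₗ D =
      (raise e ^ s) ∘ₗ TensorProduct.mk K _ _ 1 ∘ₗ Submodule.subtype _ from
    LinearMap.congr_fun h x
  refine LinearMap.ext_on_range (span_range_wedge (s + t)) fun v => ?_
  exact (congrArg _ (hD.incl_apply_wedge v)).trans (raise_pow_one_tmul_ιMulti e v).symm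

lemma IsComulMap.factorial_smul_incl_eq_lower_pow (hD : IsComulMap K n s t D)
    (x : Lam K n (s + t)) :
    (t.factorial : K) • incl K (V K n) s t (D x) =
      (lower e ^ t) ((x : ExteriorAlgebra K (V K n)) ⊗ₜ 1) := by
  suffices h : (t.factorial : K) • incl K (V K n) s t ∘ₗ D =
      (lower e ^ t) ∘ₗ (TensorProduct.mk K _ _).flip 1 ∘ₗ Submodule.subtype _ from
    LinearMap.congr_fun h x
  refine LinearMap.ext_on_range (span_range_wedge (s + t)) fun v => ?_
  exact (congrArg _ (hD.incl_apply_wedge v)).trans (lower_pow_ιMulti_tmul_one e v).symm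

end IsComulMap

variable {mf : ∀ p q : ℕ, Lam K n p ⊗[K] Lam K n q →ₗ[K] Lam K n (p + q)}
  {Df : ∀ p q : ℕ, Lam K n (p + q) →ₗ[K] Lam K n p ⊗[K] Lam K n q}
  (hmf : ∀ p q, IsMulMap K n p q (mf p q)) (hDf : ∀ p q, IsComulMap K n p q (Df p q))

include hmf hDf

lemma factorial_smul_incl_deltaMap {a b t : ℕ} (ht : t ≤ b) (z : Lam K n a ⊗[K] Lam K n b) :
    (t.factorial : K) • incl K (V K n) _ _ (deltaMap K n mf Df a b t ht z) =
      (raise e ^ t) (incl K (V K n) a b z) := by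
  induction z with
  | zero => simp
  | add z w hz hw => simp only [map_add, smul_add, hz, hw]
  | tmul x y =>
    have hmul (d : Lam K n t ⊗[K] Lam K n (b - t)) :
        incl K (V K n) _ _ (TensorProduct.map (mf a t) LinearMap.id
          ((TensorProduct.assoc K _ _ _).symm (x ⊗ₜ d))) =
        TensorProduct.map (LinearMap.mulLeft K (x : ExteriorAlgebra K (V K n))) LinearMap.id
          (incl K (V K n) _ _ d) := by
      induction d with
      | zero => simp
      | add d d' hd hd' => simp only [map_add, TensorProduct.tmul_add, hd, hd']
      | tmul d d' => simp [(hmf a t).coe_apply]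
    rw [incl_tmul, raise_pow_tmul, ← coe_ecast (by omega : b = t + (b - t)) y,
      ← (hDf _ _).factorial_smul_incl_eq_raise_pow, map_smul, ← hmul]
    rfl

lemma factorial_smul_incl_thetaMap {a b t : ℕ} (ht : t ≤ a) (z : Lam K n a ⊗[K] Lam K n b) :
    (t.factorial : K) • incl K (V K n) _ _ (thetaMap K n mf Df a b t ht z) =
      (lower e ^ t) (incl K (V K n) a b z) := by
  induction z with
  | zero => simp
  | add z w hz hw => simp only [map_add, smul_add, hz, hw]
  | tmul x y =>
    have hmul (d : Lam K n (a - t) ⊗[K] Lam K n t) :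
        incl K (V K n) _ _ (TensorProduct.map LinearMap.id
          ((ecast K n (by omega : t + b = b + t)).toLinearMap ∘ₗ mf t b)
          (TensorProduct.assoc K _ _ _ (d ⊗ₜ y))) =
        TensorProduct.map LinearMap.id (LinearMap.mulRight K (y : ExteriorAlgebra K (V K n)))
          (incl K (V K n) _ _ d) := by
      induction d with
      | zero => simp
      | add d d' hd hd' => simp only [map_add, TensorProduct.add_tmul, hd, hd']
      | tmul d d' => simp [(hmf t b).coe_apply, coe_ecast]
    rw [incl_tmul, lower_pow_tmul, ← coe_ecast (by omega : a = a - t + t) x,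
      ← (hDf _ _).factorial_smul_incl_eq_lower_pow, map_smul, ← hmul]
    rfl

lemma factorial_sq_smul_incl_PhiMap {a b t : ℕ} (hta : t ≤ a) (htb : t ≤ b)
    (z : Lam K n a ⊗[K] Lam K n b) :
    (t.factorial * t.factorial : K) •
        incl K (V K n) a b (PhiMap K n mf Df a b t hta htb z) =
      (lower e ^ t) ((raise e ^ t) (incl K (V K n) a b z)) := by
  rw [PhiMap, LinearMap.comp_apply, LinearMap.comp_apply, LinearEquiv.coe_coe, incl_congr_ecast,
    mul_smul, factorial_smul_incl_thetaMap e hmf hDf, ← map_smul,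
    factorial_smul_incl_deltaMap e hmf hDf]

lemma incl_theta1 {p q : ℕ} (hq : 1 ≤ q) (z : Lam K n (p + 1) ⊗[K] Lam K n (q - 1)) :
    incl K (V K n) p q (theta1 K n mf Df p q hq z) = lower e (incl K (V K n) _ _ z) := by
  rw [theta1, LinearMap.comp_apply, LinearEquiv.coe_coe, incl_congr_ecast]
  simpa using factorial_smul_incl_thetaMap e hmf hDf (Nat.le_add_left 1 p) z

lemma mem_schurRel_iff {p q : ℕ} (z : Lam K n p ⊗[K] Lam K n q) :
    z ∈ schurRel K n mf Df p q ↔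
      incl K (V K n) p q z ∈ (bidegree K (V K n) (p + 1) (q - 1)).map (lower e) := by
  obtain rfl | hq : q = 0 ∨ 1 ≤ q := by omega
  · rw [schurRel, dif_neg (by omega), bidegree_eq_bot (by simp), Submodule.map_bot,
      Submodule.mem_bot, Submodule.mem_bot, map_eq_zero_iff _ (incl_injective p 0)]
  · have hrange : bidegree K (V K n) (p + 1) (q - 1) =
        LinearMap.range (incl K (V K n) (p + 1) (q - 1)) := by
      rw [range_incl]
      push_cast [hq]
      rfl
    rw [schurRel, dif_pos hq, hrange, ← LinearMap.range_comp, LinearMap.mem_range,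
      LinearMap.mem_range]
    refine exists_congr fun w => ?_
    rw [LinearMap.comp_apply, ← incl_theta1 e hmf hDf hq, (incl_injective p q).eq_iff]

end StructureMaps

section Coefficients

lemma descFactorial_mul_descPochhammer_eval {R : Type*} [CommRing R] (i t : ℕ) (d : ℤ) :
    (i.descFactorial t * (descPochhammer R t).eval (d : R) : R) =
      t.factorial * t.factorial * ((i.choose t * Ring.choose d t : ℤ) : R) := by
  have hd : (descPochhammer ℤ t).eval d = t.factorial * Ring.choose d t := by
    rw [Polynomial.eval_eq_smeval, Ring.descPochhammer_eq_factorial_smul_choose, nsmul_eq_mul]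
  rw [← descPochhammer_eval_cast, hd, Nat.descFactorial_eq_factorial_mul_choose]
  push_cast
  ring

lemma natCast_cCoef {a b : ℕ} (hba : b ≤ a) (t i : ℕ) :
    (cCoef a b t i : ℤ) = i.choose t * Ring.choose ((a : ℤ) - b + t + i) t := by
  have hd : (a : ℤ) - b + t + i = (a - b + t + i : ℕ) := by omega
  rw [hd, Ring.choose_natCast, cCoef, Nat.cast_mul]

end Coefficients

section Schur

variable {K κ : Type} [Field K] [CharZero K] {n : ℕ} [Fintype κ]
  {mf : ∀ p q : ℕ, Lam K n p ⊗[K] Lam K n q →ₗ[K] Lam K n (p + q)}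
  {Df : ∀ p q : ℕ, Lam K n (p + q) →ₗ[K] Lam K n p ⊗[K] Lam K n q}
  (hmf : ∀ p q, IsMulMap K n p q (mf p q)) (hDf : ∀ p q, IsComulMap K n p q (Df p q))
  {a b i t : ℕ}

include hmf hDf

lemma schurProj_deltaMap_eq_zero_iff (e : Module.Basis κ K (V K n)) (hib : i ≤ b)
    (z : Lam K n a ⊗[K] Lam K n b) :
    schurProj K n mf Df (a + i) (b - i) (deltaMap K n mf Df a b i hib z) = 0 ↔
      (raise e ^ i) (incl K (V K n) a b z) ∈
        (bidegree K (V K n) (a + (i + 1 : ℤ)) (b - (i + 1 : ℤ))).map (lower e) := by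
  have hi : (i.factorial : K) ≠ 0 := Nat.cast_ne_zero.mpr i.factorial_ne_zero
  rw [schurProj, Submodule.mkQ_apply, Submodule.Quotient.mk_eq_zero,
    mem_schurRel_iff e hmf hDf, ← factorial_smul_incl_deltaMap e hmf hDf hib,
    Submodule.smul_mem_iff _ hi, Nat.cast_add, Nat.cast_sub hib, add_assoc, sub_sub]

lemma schurProj_deltaMap_PhiMap (hib : i ≤ b) (hta : t ≤ a) (htb : t ≤ b) :
    (schurProj K n mf Df (a + i) (b - i) ∘ₗ deltaMap K n mf Df a b i hib) ∘ₗ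
        PhiMap K n mf Df a b t hta htb =
      ((i.choose t * Ring.choose ((a : ℤ) - b + t + i) t : ℤ) : K) •
        (schurProj K n mf Df (a + i) (b - i) ∘ₗ deltaMap K n mf Df a b i hib) := by
  let e := Pi.basisFun K (Fin n)
  set c : K := ((i.choose t * Ring.choose ((a : ℤ) - b + t + i) t : ℤ) : K) with hc
  have ht : (t.factorial * t.factorial : K) ≠ 0 :=
    mul_self_ne_zero.mpr (Nat.cast_ne_zero.mpr t.factorial_ne_zero)
  refine LinearMap.ext fun z => ?_
  have hz : incl K (V K n) a b z ∈ bidegree K (V K n) (a + (0 : ℤ)) (b - (0 : ℤ)) := by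
    simpa using incl_mem_bidegree z
  obtain ⟨w, hw, h⟩ :=
    (isSl2Action_raise_lower e a b).exists_raise_pow_lower_pow_raise_pow_eq hz i t
  have hcoef : (i.descFactorial t * (descPochhammer K t).eval
      (((a : ℤ) : K) - ((b : ℤ) : K) + 2 * ((0 : ℤ) : K) + t + i) : K) =
      t.factorial * t.factorial * c := by
    rw [hc, ← descFactorial_mul_descPochhammer_eval]
    push_cast
    rw [mul_zero, add_zero]
  rw [hcoef, ← factorial_sq_smul_incl_PhiMap e hmf hDf hta htb] at h
  simp only [LinearMap.comp_apply, LinearMap.smul_apply]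
  rw [← sub_eq_zero, ← map_smul, ← map_smul, ← map_sub, ← map_sub,
    schurProj_deltaMap_eq_zero_iff hmf hDf e, ← Submodule.smul_mem_iff _ ht]
  rw [zero_add] at hw
  refine ⟨w, hw, ?_⟩
  rw [eq_sub_of_add_eq h.symm]
  simp only [map_sub, map_smul, smul_sub, smul_smul]

lemma schurProj_comp_deltaMap_ne_zero (hib : i ≤ b) (hba : b ≤ a + i) (hn : a + i ≤ n) :
    schurProj K n mf Df (a + i) (b - i) ∘ₗ deltaMap K n mf Df a b i hib ≠ 0 := by
  let e := Pi.basisFun K (Fin n)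
  have hsl2 := isSl2Action_raise_lower e a b
  obtain ⟨u, hu, hEu, hu0⟩ :=
    exists_mem_bidegree_raise_eq_zero e ((Nat.sub_le b i).trans hba) hn
  push_cast [hib] at hu
  obtain ⟨z, hz⟩ : (lower e ^ i) u ∈ LinearMap.range (incl K (V K n) a b) := by
    simpa [range_incl] using hsl2.lower_pow_mem hu i
  intro h
  refine hsl2.raise_pow_lower_pow_notMem_map_lower (i := i) (l := a + i + i - b)
    (N := b) hu hEu hu0 ?_ (by omega) (bidegree_eq_bot (by omega)) ?_
  · push_cast [hba.trans (Nat.le_add_right _ i)]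
    ring
  · rw [← hz]
    exact (schurProj_deltaMap_eq_zero_iff hmf hDf e hib z).mp (LinearMap.congr_fun h z)

theorem statement3_general (hib : i ≤ b) (hta : t ≤ a) (htb : t ≤ b) :
    (schurProj K n mf Df (a + i) (b - i) ∘ₗ deltaMap K n mf Df a b i hib) ∘ₗ
        PhiMap K n mf Df a b t hta htb =
      ((i.choose t * Ring.choose ((a : ℤ) - b + t + i) t : ℤ) : K) •
        (schurProj K n mf Df (a + i) (b - i) ∘ₗ deltaMap K n mf Df a b i hib) ∧
    (b ≤ a + i → a + i ≤ n →
      schurProj K n mf Df (a + i) (b - i) ∘ₗ deltaMap K n mf Df a b i hib ≠ 0) :=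
  ⟨schurProj_deltaMap_PhiMap hmf hDf hib hta htb, schurProj_comp_deltaMap_ne_zero hmf hDf hib⟩

end Schur

/-- Lemma 3.2 of the paper: for `a ≥ b ≥ i ≥ t` and `μ = (a+i, b-i)`,
`π_μ ∘ δ_i ∘ Φ_t = c_t(a,b,i) · (π_μ ∘ δ_i)`; moreover if `n ≥ a+b` then `π_μ ∘ δ_i ≠ 0`. -/
theorem statement3 (K : Type) [Field K] [CharZero K] (n : ℕ) (a b i t : ℕ)
    (hba : b ≤ a) (hib : i ≤ b) (hti : t ≤ i)
    (mf : ∀ p q : ℕ, Lam K n p ⊗[K] Lam K n q →ₗ[K] Lam K n (p+q))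
    (Df : ∀ p q : ℕ, Lam K n (p+q) →ₗ[K] Lam K n p ⊗[K] Lam K n q)
    (hmf : ∀ p q, IsMulMap K n p q (mf p q))
    (hDf : ∀ p q, IsComulMap K n p q (Df p q)) :
    (schurProj K n mf Df (a+i) (b-i) ∘ₗ deltaMap K n mf Df a b i hib)
        ∘ₗ PhiMap K n mf Df a b t (by omega) (by omega) =
      (cCoef a b t i : K) •
        (schurProj K n mf Df (a+i) (b-i) ∘ₗ deltaMap K n mf Df a b i hib) ∧
    (a + b ≤ n →
      schurProj K n mf Df (a+i) (b-i) ∘ₗ deltaMap K n mf Df a b i hib ≠ 0) := by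
  obtain ⟨hcomp, hne⟩ := statement3_general hmf hDf hib (by omega : t ≤ a) (by omega : t ≤ b)
  rw [← natCast_cCoef hba, Int.cast_natCast] at hcomp
  exact ⟨hcomp, fun hn => hne (by omega) (by omega)⟩

end MMS
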